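/- Suppose B divides K and let the uniform batch grid be t_b = (b−1)(K/B) + 1 for b ∈ [B+1]; for each k ∈ [K], let b_k = t_b where b is the unique index with t_b ≤ k < t_{b+1}. Define the set C = {(k,h) ∈ [K] × [H] : √(φ_h^{kᵀ} (Λ_h^{b_k})^{−1} φ_h^k) > 2 √(φ_h^{kᵀ} (Λ_h^k)^{−1} φ_h^k)}. Then |C| ≤ d H K log(K/d + 1)/(2 B log 2). -/

import Mathlib

open Matrix

lemma aux_cs {d : ℕ} {M : Matrix (Fin d) (Fin d) ℝ} (hM : M.PosDef) (x v : Fin d → ℝ) :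
    (v ⬝ᵥ M *ᵥ x) ^ 2 ≤ (v ⬝ᵥ M *ᵥ v) * (x ⬝ᵥ M *ᵥ x) := by
  by_cases hv : v = 0
  · simp [hv]
  have hpos : 0 < v ⬝ᵥ M *ᵥ v := by simpa using hM.dotProduct_mulVec_pos hv
  have hsymm : x ⬝ᵥ M *ᵥ v = v ⬝ᵥ M *ᵥ x := by
    have ht : Mᵀ = M := by simpa using hM.isHermitian.eq
    rw [dotProduct_mulVec, ← mulVec_transpose, ht, dotProduct_comm]
  have h := hM.posSemidef.dotProduct_mulVec_nonneg
    ((v ⬝ᵥ M *ᵥ v) • x - (v ⬝ᵥ M *ᵥ x) • v)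
  simp only [star_trivial, mulVec_sub, mulVec_smul, sub_dotProduct, dotProduct_sub,
    smul_dotProduct, dotProduct_smul, smul_eq_mul, hsymm] at h
  have h2 : 0 ≤ (v ⬝ᵥ M *ᵥ v) * ((v ⬝ᵥ M *ᵥ v) * (x ⬝ᵥ M *ᵥ x) - (v ⬝ᵥ M *ᵥ x) ^ 2) := by
    linarith
  have := nonneg_of_mul_nonneg_right h2 hpos
  linarith

lemma aux_posDef {d : ℕ} {A : Matrix (Fin d) (Fin d) ℝ} (hA : A.PosDef) (v : Fin d → ℝ) :
    (A + vecMulVec v v).PosDef := by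
  have := posSemidef_vecMulVec_self_star v
  exact hA.add_posSemidef (by simpa using this)

lemma aux_det {d : ℕ} {A : Matrix (Fin d) (Fin d) ℝ} (hA : A.PosDef) (v : Fin d → ℝ) :
    (A + vecMulVec v v).det = A.det * (1 + v ⬝ᵥ A⁻¹ *ᵥ v) := by
  rw [vecMulVec_eq Unit, det_add_replicateCol_mul_replicateRow (by simpa using hA.det_pos.ne')]
  congr 1
  simp [det_unique, Matrix.mul_assoc, mulVec, dotProduct, Matrix.mul_apply]

lemma aux_step {d : ℕ} {A : Matrix (Fin d) (Fin d) ℝ} (hA : A.PosDef) (v x : Fin d → ℝ) :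
    A.det * (x ⬝ᵥ A⁻¹ *ᵥ x) ≤
      (A + vecMulVec v v).det * (x ⬝ᵥ (A + vecMulVec v v)⁻¹ *ᵥ x) := by
  have hcs := aux_cs hA.inv x v
  have hs : 0 ≤ v ⬝ᵥ A⁻¹ *ᵥ v := by simpa using hA.inv.posSemidef.dotProduct_mulVec_nonneg v
  have hsymm : x ⬝ᵥ A⁻¹ *ᵥ v = v ⬝ᵥ A⁻¹ *ᵥ x := by
    have ht : A⁻¹ᵀ = A⁻¹ := by simpa using hA.inv.isHermitian.eq
    rw [dotProduct_mulVec, ← mulVec_transpose, ht, dotProduct_comm]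
  have hAu : A * A⁻¹ = 1 := mul_nonsing_inv A (by simpa using hA.det_pos.ne')
  have hB := aux_posDef hA v
  have hBu : (A + vecMulVec v v)⁻¹ * (A + vecMulVec v v) = 1 :=
    nonsing_inv_mul _ (by simpa using hB.det_pos.ne')
  have hinv : (A + vecMulVec v v)⁻¹ *ᵥ x =
      A⁻¹ *ᵥ x - ((v ⬝ᵥ A⁻¹ *ᵥ x) / (1 + v ⬝ᵥ A⁻¹ *ᵥ v)) • A⁻¹ *ᵥ v := by
    have : x = (A + vecMulVec v v) *ᵥ
      (A⁻¹ *ᵥ x - ((v ⬝ᵥ A⁻¹ *ᵥ x) / (1 + v ⬝ᵥ A⁻¹ *ᵥ v)) • A⁻¹ *ᵥ v) := by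
      have hAx : ∀ y, A *ᵥ (A⁻¹ *ᵥ y) = y := fun y => by
        rw [mulVec_mulVec, hAu, one_mulVec]
      simp only [mulVec_sub, mulVec_smul, add_mulVec, hAx, vecMulVec_mulVec]
      ext i
      simp
      field_simp
      ring
    conv_lhs => rw [this]
    rw [mulVec_mulVec, hBu, one_mulVec]
  rw [aux_det hA, mul_assoc, hinv, dotProduct_sub, dotProduct_smul, hsymm, smul_eq_mul]
  apply mul_le_mul_of_nonneg_left _ hA.det_pos.le
  have : (1 + v ⬝ᵥ A⁻¹ *ᵥ v) * (x ⬝ᵥ A⁻¹ *ᵥ x -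
      (v ⬝ᵥ A⁻¹ *ᵥ x) / (1 + v ⬝ᵥ A⁻¹ *ᵥ v) * (v ⬝ᵥ A⁻¹ *ᵥ x)) =
      (1 + v ⬝ᵥ A⁻¹ *ᵥ v) * (x ⬝ᵥ A⁻¹ *ᵥ x) - (v ⬝ᵥ A⁻¹ *ᵥ x) ^ 2 := by
    field_simp
  rw [this]
  linarith

lemma aux_logdet {d : ℕ} (hd : 1 ≤ d) {A : Matrix (Fin d) (Fin d) ℝ} (hA : A.PosDef) :
    Real.log A.det ≤ d * Real.log (A.trace / d) := by
  have hd0 : (0 : ℝ) < d := by exact_mod_cast hd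
  have hdet : A.det = ∏ i, hA.1.eigenvalues i := by
    simpa using hA.1.det_eq_prod_eigenvalues
  have htr : A.trace = ∑ i, hA.1.eigenvalues i := by
    simpa using hA.1.trace_eq_sum_eigenvalues
  have hpos := hA.eigenvalues_pos
  have : Nonempty (Fin d) := ⟨⟨0, hd⟩⟩
  have htp : 0 < A.trace := hA.trace_pos
  have hm : 0 < A.trace / d := div_pos htp hd0
  rw [hdet, Real.log_prod (fun i _ => (hpos i).ne')]
  have h1 : ∀ i ∈ Finset.univ, Real.log (hA.1.eigenvalues i) ≤
      hA.1.eigenvalues i / (A.trace / d) - 1 + Real.log (A.trace / d) := by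
    intro i _
    have := Real.log_le_sub_one_of_pos (div_pos (hpos i) hm)
    rw [Real.log_div (hpos i).ne' hm.ne'] at this
    linarith
  refine (Finset.sum_le_sum h1).trans ?_
  rw [Finset.sum_add_distrib, Finset.sum_sub_distrib, ← Finset.sum_div, ← htr]
  simp only [Finset.sum_const, Finset.card_univ, Fintype.card_fin, nsmul_eq_mul, mul_one]
  have : A.trace / (A.trace / d) = d := by field_simp
  rw [this]
  linarith

lemma aux_count (B M : ℕ) (D : ℕ → ℝ) (hD : Monotone D) (c : ℝ)
    (S : Finset ℕ) (hS : ∀ k ∈ S, ∃ b ∈ Finset.range B, b * M < k ∧ k ≤ (b + 1) * M ∧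
      c ≤ D ((b + 1) * M) - D (b * M)) :
    (S.card : ℝ) * c ≤ M * (D (B * M) - D 0) := by
  by_cases hc : c < 0
  · have h1 : (S.card : ℝ) * c ≤ 0 := mul_nonpos_of_nonneg_of_nonpos (by positivity) hc.le
    have h2 := hD (Nat.zero_le (B * M))
    have : 0 ≤ (M : ℝ) * (D (B * M) - D 0) := mul_nonneg (by positivity) (by linarith)
    linarith
  push Not at hc
  have hsub : S ⊆ (Finset.range B).biUnion
      (fun b => S.filter (fun k => b * M < k ∧ k ≤ (b + 1) * M ∧
        c ≤ D ((b + 1) * M) - D (b * M))) := by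
    intro k hk
    obtain ⟨b, hb, h⟩ := hS k hk
    exact Finset.mem_biUnion.2 ⟨b, hb, Finset.mem_filter.2 ⟨hk, h⟩⟩
  have hcard := (Finset.card_le_card hsub).trans Finset.card_biUnion_le
  have hcard' : (S.card : ℝ) ≤ ∑ b ∈ Finset.range B, ((S.filter (fun k => b * M < k ∧
      k ≤ (b + 1) * M ∧ c ≤ D ((b + 1) * M) - D (b * M))).card : ℝ) := by
    exact_mod_cast hcard
  have htel : ∑ b ∈ Finset.range B, (D ((b + 1) * M) - D (b * M)) = D (B * M) - D 0 := by
    rw [Finset.sum_range_sub (fun b => D (b * M))]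
    simp
  rw [← htel, Finset.mul_sum]
  refine (mul_le_mul_of_nonneg_right hcard' hc).trans ?_
  rw [Finset.sum_mul]
  refine Finset.sum_le_sum fun b _ => ?_
  have hmono : D (b * M) ≤ D ((b + 1) * M) := hD (Nat.mul_le_mul_right _ (by omega))
  by_cases hcb : c ≤ D ((b + 1) * M) - D (b * M)
  · refine mul_le_mul ?_ hcb hc (by positivity)
    have : S.filter (fun k => b * M < k ∧ k ≤ (b + 1) * M ∧
        c ≤ D ((b + 1) * M) - D (b * M)) ⊆ Finset.Ioc (b * M) ((b + 1) * M) := by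
      intro k hk
      have := (Finset.mem_filter.1 hk).2
      exact Finset.mem_Ioc.2 ⟨this.1, this.2.1⟩
    have := Finset.card_le_card this
    rw [Nat.card_Ioc] at this
    have h3 : (b + 1) * M - b * M = M := by rw [add_mul]; omega
    rw [h3] at this
    exact_mod_cast this
  · have : S.filter (fun k => b * M < k ∧ k ≤ (b + 1) * M ∧
        c ≤ D ((b + 1) * M) - D (b * M)) = ∅ := by
      apply Finset.filter_eq_empty_iff.2
      intro k _ h
      exact hcb h.2.2
    rw [this]
    simp only [Finset.card_empty, Nat.cast_zero, zero_mul]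
    exact mul_nonneg (by positivity) (by linarith)

lemma aux_level (d K B : ℕ) (hd : 1 ≤ d) (hB : 1 ≤ B) (hdvd : B ∣ K)
    (ψ : ℕ → Fin d → ℝ) (hψ : ∀ k ∈ Finset.Icc 1 K, ψ k ⬝ᵥ ψ k ≤ 1)
    (L : ℕ → Matrix (Fin d) (Fin d) ℝ)
    (hL : ∀ n, L n = 1 + ∑ τ ∈ Finset.Icc 1 n, vecMulVec (ψ τ) (ψ τ))
    (S : Finset ℕ) (hS : ∀ k ∈ S, ∃ b ∈ Finset.range B, b * (K / B) < k ∧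
      k ≤ (b + 1) * (K / B) ∧
      2 * Real.sqrt (ψ k ⬝ᵥ (L (k - 1))⁻¹ *ᵥ ψ k) <
        Real.sqrt (ψ k ⬝ᵥ (L (b * (K / B)))⁻¹ *ᵥ ψ k)) :
    (S.card : ℝ) * (2 * Real.log 2) ≤ (K / B : ℕ) * (d * Real.log ((K : ℝ) / d + 1)) := by
  have hd0 : (0 : ℝ) < d := by exact_mod_cast hd
  have hL0 : L 0 = 1 := by simp [hL]
  have hLs : ∀ n, L (n + 1) = L n + vecMulVec (ψ (n + 1)) (ψ (n + 1)) := by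
    intro n
    rw [hL, hL, Finset.sum_Icc_succ_top (by omega), add_assoc]
  have hP : ∀ n, (L n).PosDef := by
    intro n
    induction n with
    | zero => rw [hL0]; exact PosDef.one
    | succ n ih => rw [hLs]; exact aux_posDef ih _
  have hmono : Monotone (fun n => (L n).det) := by
    refine monotone_nat_of_le_succ fun n => ?_
    simp only [hLs]
    rw [aux_det (hP n)]
    have hs : 0 ≤ ψ (n + 1) ⬝ᵥ (L n)⁻¹ *ᵥ ψ (n + 1) := by
      simpa using (hP n).inv.posSemidef.dotProduct_mulVec_nonneg (ψ (n + 1))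
    nlinarith [(hP n).det_pos]
  have hD : Monotone (fun n => Real.log (L n).det) := fun m n h =>
    Real.log_le_log (hP m).det_pos (hmono h)
  have hq : ∀ x : Fin d → ℝ, Monotone (fun n => (L n).det * (x ⬝ᵥ (L n)⁻¹ *ᵥ x)) := by
    intro x
    refine monotone_nat_of_le_succ fun n => ?_
    simp only [hLs]
    exact aux_step (hP n) _ _
  have hcount := aux_count B (K / B) (fun n => Real.log (L n).det) hD (2 * Real.log 2) S (by
    intro k hk
    obtain ⟨b, hb, h1, h2, h3⟩ := hS k hk
    refine ⟨b, hb, h1, h2, ?_⟩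
    have ha : 0 ≤ ψ k ⬝ᵥ (L (k - 1))⁻¹ *ᵥ ψ k := by
      simpa using (hP (k - 1)).inv.posSemidef.dotProduct_mulVec_nonneg (ψ k)
    have hlt : 4 * (ψ k ⬝ᵥ (L (k - 1))⁻¹ *ᵥ ψ k) < ψ k ⬝ᵥ (L (b * (K / B)))⁻¹ *ᵥ ψ k := by
      have h4 : Real.sqrt (4 * (ψ k ⬝ᵥ (L (k - 1))⁻¹ *ᵥ ψ k)) =
          2 * Real.sqrt (ψ k ⬝ᵥ (L (k - 1))⁻¹ *ᵥ ψ k) := by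
        rw [Real.sqrt_mul (by norm_num), show (4 : ℝ) = 2 ^ 2 by norm_num,
          Real.sqrt_sq (by norm_num)]
      rw [← h4] at h3
      exact (Real.sqrt_lt_sqrt_iff (by positivity)).1 h3
    have hqk : (L (b * (K / B))).det * (ψ k ⬝ᵥ (L (b * (K / B)))⁻¹ *ᵥ ψ k) ≤
        (L (k - 1)).det * (ψ k ⬝ᵥ (L (k - 1))⁻¹ *ᵥ ψ k) := hq (ψ k) (by omega)
    have hp1 := (hP (b * (K / B))).det_pos
    have hp2 := (hP (k - 1)).det_pos
    have h5 : 4 * (L (b * (K / B))).det ≤ (L (k - 1)).det := by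
      by_contra hcon
      push Not at hcon
      nlinarith
    have h6 : (L (k - 1)).det ≤ (L ((b + 1) * (K / B))).det := hmono (by omega)
    have h7 := Real.log_le_log (by positivity) (h5.trans h6)
    rw [Real.log_mul (by norm_num) hp1.ne', show (4 : ℝ) = 2 ^ 2 by norm_num, Real.log_pow] at h7
    push_cast at h7
    linarith)
  refine hcount.trans (mul_le_mul_of_nonneg_left ?_ (by positivity))
  rw [Nat.mul_div_cancel' hdvd]
  simp only [hL0, det_one, Real.log_one, sub_zero]
  refine (aux_logdet hd (hP K)).trans (mul_le_mul_of_nonneg_left ?_ hd0.le)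
  have : Nonempty (Fin d) := ⟨⟨0, hd⟩⟩
  refine Real.log_le_log (div_pos (hP K).trace_pos hd0) ?_
  have htr : (L K).trace ≤ d + K := by
    rw [hL, trace_add, trace_one, trace_sum, Fintype.card_fin]
    simp only [trace_vecMulVec]
    have := Finset.sum_le_sum hψ
    simp at this
    linarith
  rw [div_add_one hd0.ne']
  gcongr
  linarith



/-- With `B ∣ K`, the uniform batch grid `t_b = (b-1)(K/B) + 1`
and `b_k = t_b` for the unique `b` with `t_b ≤ k < t_{b+1}`, the set
`C = {(k,h) ∈ [K]×[H] : √(φ_h^kᵀ (Λ_h^{b_k})⁻¹ φ_h^k)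
  > 2 √(φ_h^kᵀ (Λ_h^k)⁻¹ φ_h^k)}` satisfies
`|C| ≤ d H K log(K/d + 1) / (2 B log 2)`. -/
theorem stmt_10 (d H K B : ℕ) (hd : 1 ≤ d) (hH : 1 ≤ H) (hK : 1 ≤ K)
    (hB : 1 ≤ B) (hdvd : B ∣ K)
    (φ : ℕ → ℕ → Fin d → ℝ)
    (hφ : ∀ h ∈ Finset.Icc 1 H, ∀ k ∈ Finset.Icc 1 K,
      Real.sqrt (φ h k ⬝ᵥ φ h k) ≤ 1)
    (Λ : ℕ → ℕ → Matrix (Fin d) (Fin d) ℝ)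
    (hΛ : ∀ h k, Λ h k = (1 : Matrix (Fin d) (Fin d) ℝ) +
      ∑ τ ∈ Finset.Icc 1 (k - 1), Matrix.vecMulVec (φ h τ) (φ h τ))
    (t : ℕ → ℕ) (ht : ∀ b, t b = (b - 1) * (K / B) + 1)
    (bk : ℕ → ℕ)
    (hbk : ∀ k ∈ Finset.Icc 1 K, ∃ b ∈ Finset.Icc 1 B,
      bk k = t b ∧ t b ≤ k ∧ k < t (b + 1)) :
    ((((Finset.Icc 1 K) ×ˢ (Finset.Icc 1 H)).filter (fun p =>
        2 * Real.sqrt (φ p.2 p.1 ⬝ᵥ (Λ p.2 p.1)⁻¹.mulVec (φ p.2 p.1)) <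
          Real.sqrt (φ p.2 p.1 ⬝ᵥ (Λ p.2 (bk p.1))⁻¹.mulVec (φ p.2 p.1)))).card : ℝ)
      ≤ d * H * K * Real.log ((K : ℝ) / d + 1) / (2 * B * Real.log 2) := by
  have hlog : 0 < Real.log 2 := Real.log_pos (by norm_num)
  have hB0 : (0 : ℝ) < B := by exact_mod_cast hB
  set C := ((Finset.Icc 1 K) ×ˢ (Finset.Icc 1 H)).filter (fun p =>
        2 * Real.sqrt (φ p.2 p.1 ⬝ᵥ (Λ p.2 p.1)⁻¹.mulVec (φ p.2 p.1)) <
          Real.sqrt (φ p.2 p.1 ⬝ᵥ (Λ p.2 (bk p.1))⁻¹.mulVec (φ p.2 p.1))) with hC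
  have hmaps : ∀ p ∈ C, p.2 ∈ Finset.Icc 1 H := by
    intro p hp
    exact (Finset.mem_product.1 (Finset.mem_filter.1 hp).1).2
  have hcard : C.card = ∑ h ∈ Finset.Icc 1 H, (C.filter (fun p => p.2 = h)).card :=
    Finset.card_eq_sum_card_fiberwise hmaps
  have hlev : ∀ h ∈ Finset.Icc 1 H, ((C.filter (fun p => p.2 = h)).card : ℝ) * (2 * Real.log 2)
      ≤ (K / B : ℕ) * (d * Real.log ((K : ℝ) / d + 1)) := by
    intro h hh
    have hinj : Set.InjOn Prod.fst (C.filter (fun p => p.2 = h) : Set (ℕ × ℕ)) := by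
      intro p hp q hq hpq
      have h1 := (Finset.mem_filter.1 hp).2
      have h2 := (Finset.mem_filter.1 hq).2
      exact Prod.ext hpq (h1.trans h2.symm)
    rw [← Finset.card_image_of_injOn hinj]
    refine aux_level d K B hd hB hdvd (φ h) ?_ (fun n => Λ h (n + 1)) ?_ _ ?_
    · intro k hk
      have := hφ h hh k hk
      rwa [Real.sqrt_le_one] at this
    · intro n
      rw [hΛ]
      rfl
    · intro k hk
      obtain ⟨p, hp, rfl⟩ := Finset.mem_image.1 hk
      obtain ⟨hpC, rfl⟩ := Finset.mem_filter.1 hp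
      obtain ⟨hpm, hlt⟩ := Finset.mem_filter.1 hpC
      have hpK := (Finset.mem_product.1 hpm).1
      obtain ⟨b, hb, hb1, hb2, hb3⟩ := hbk p.1 hpK
      obtain ⟨hb4, hb5⟩ := Finset.mem_Icc.1 hb
      obtain ⟨b, rfl⟩ : ∃ c, b = c + 1 := ⟨b - 1, by omega⟩
      simp only [ht, Nat.add_sub_cancel] at hb1 hb2 hb3
      have hk1 : p.1 - 1 + 1 = p.1 := by have := (Finset.mem_Icc.1 hpK).1; omega
      refine ⟨b, Finset.mem_range.2 (by omega), by omega, by omega, ?_⟩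
      simp only [hk1]
      rw [← hb1]
      exact hlt
  have hsum : (C.card : ℝ) * (2 * Real.log 2) ≤
      H * ((K / B : ℕ) * (d * Real.log ((K : ℝ) / d + 1))) := by
    rw [hcard]
    push_cast only [Nat.cast_sum]
    rw [Finset.sum_mul]
    refine (Finset.sum_le_sum hlev).trans ?_
    simp
  rw [Nat.cast_div hdvd hB0.ne'] at hsum
  rw [le_div_iff₀ (by positivity)]
  have := mul_le_mul_of_nonneg_right hsum hB0.le
  calc _ = (C.card : ℝ) * (2 * Real.log 2) * B := by ring
    _ ≤ _ := this
    _ = _ := by field_simp
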